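/- Let (R,B) be an EIC problem such that every requested block is held by some node (for every (u,a) ∈ P there exists w ∈ [n] with B_{wa}=1). Then (D)_{(R,B)} ≤ 2·(C)_{(R,B)}: there is a decentralized linear broadcast solution whose length is at most twice the minimum length of a centralized linear broadcast solution. -/

import Mathlib

open Matrix BigOperators

namespace EIC

variable {n m : ℕ}

/-- The vertex set of the problem graph of the EIC problem `(R, B)`:
one vertex for each requirement pair `(u, a)` with `R u a = 1`. -/
abbrev Vtx (R : Matrix (Fin n) (Fin m) (ZMod 2)) : Type :=
  {p : Fin n × Fin m // R p.1 p.2 = 1}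

/-- `(R, B)` have disjoint supports: no position has both `B = 1` and `R = 1`. -/
def DisjointSupports (R B : Matrix (Fin n) (Fin m) (ZMod 2)) : Prop :=
  ∀ u a, ¬(B u a = 1 ∧ R u a = 1)

/-- The standard basis vector `e_a ∈ F_2^m`. -/
def e (m : ℕ) (a : Fin m) : Fin m → ZMod 2 := Pi.single a 1

/-- `β` (with rows indexed by `ι`) is a centralized linear broadcast solution to `(R, B)`:
for every requirement pair `(u, a)` there is `α` with `e_a = α · [β ; diag(B_u)]`. -/
def IsCentralizedSolution (R B : Matrix (Fin n) (Fin m) (ZMod 2))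
    {ι : Type} [Fintype ι] (β : Matrix ι (Fin m) (ZMod 2)) : Prop :=
  ∀ u a, R u a = 1 →
    ∃ α : ι ⊕ Fin m → ZMod 2,
      e m a = α ᵥ* Matrix.fromRows β (Matrix.diagonal (B u))

/-- `(C)_{(R,B)}`: the minimum length of a centralized linear broadcast solution. -/
noncomputable def Copt (R B : Matrix (Fin n) (Fin m) (ZMod 2)) : ℕ :=
  sInf {h | ∃ β : Matrix (Fin h) (Fin m) (ZMod 2), IsCentralizedSolution R B β}

/-- The vertical concatenation of the matrices `β u`, `u ∈ [n]`. -/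
def vconcat {h : Fin n → ℕ} (β : ∀ u : Fin n, Matrix (Fin (h u)) (Fin m) (ZMod 2)) :
    Matrix ((ℓ : Fin n) × Fin (h ℓ)) (Fin m) (ZMod 2) :=
  Matrix.of fun p => β p.1 p.2

/-- `β⁽¹⁾, …, β⁽ⁿ⁾` is a (decentralized) linear broadcast solution to `(R, B)`. -/
def IsBroadcastSolution (R B : Matrix (Fin n) (Fin m) (ZMod 2))
    {h : Fin n → ℕ} (β : ∀ u : Fin n, Matrix (Fin (h u)) (Fin m) (ZMod 2)) : Prop :=
  (∀ u a, B u a = 0 → ∀ i, β u i a = 0) ∧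
  ∀ u a, R u a = 1 →
    ∃ α : ((ℓ : Fin n) × Fin (h ℓ)) ⊕ Fin m → ZMod 2,
      e m a = α ᵥ* Matrix.fromRows (vconcat β) (Matrix.diagonal (B u))

/-- `(D)_{(R,B)}`: the minimum length of a decentralized linear broadcast solution. -/
noncomputable def Dopt (R B : Matrix (Fin n) (Fin m) (ZMod 2)) : ℕ :=
  sInf {s | ∃ (h : Fin n → ℕ) (β : ∀ u : Fin n, Matrix (Fin (h u)) (Fin m) (ZMod 2)),
    IsBroadcastSolution R B β ∧ ∑ u, h u = s}

/-- A task-based solution: a linear broadcast solution where every requirement pair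
`(u, a)` can be decoded from the broadcast of a single responsible sender `ℓ`. -/
def IsTaskBased (R B : Matrix (Fin n) (Fin m) (ZMod 2))
    {h : Fin n → ℕ} (β : ∀ u : Fin n, Matrix (Fin (h u)) (Fin m) (ZMod 2)) : Prop :=
  IsBroadcastSolution R B β ∧
  ∀ u a, R u a = 1 → ∃ ℓ : Fin n, ∃ α : Fin (h ℓ) ⊕ Fin m → ZMod 2,
    e m a = α ᵥ* Matrix.fromRows (β ℓ) (Matrix.diagonal (B u))

/-- `(T)_{(R,B)}`: the minimum length of a task-based solution. -/
noncomputable def Topt (R B : Matrix (Fin n) (Fin m) (ZMod 2)) : ℕ :=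
  sInf {s | ∃ (h : Fin n → ℕ) (β : ∀ u : Fin n, Matrix (Fin (h u)) (Fin m) (ZMod 2)),
    IsTaskBased R B β ∧ ∑ u, h u = s}

/-- The edge relation of the problem graph: for distinct requirement pairs `(u,a)`, `(w,b)`,
there is an edge from `v_{(u,a)}` to `v_{(w,b)}` iff `B u b = 1` or `a = b`. -/
def probEdge (R B : Matrix (Fin n) (Fin m) (ZMod 2)) (v w : Vtx R) : Prop :=
  v ≠ w ∧ (B v.1.1 w.1.2 = 1 ∨ v.1.2 = w.1.2)

/-- A matrix `A` fits a directed graph with edge relation `E`. -/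
def Fits {V : Type} (E : V → V → Prop) (A : Matrix V V (ZMod 2)) : Prop :=
  (∀ k, A k k = 1) ∧ ∀ k l, k ≠ l → ¬ E k l → A k l = 0

/-- `minrk₂`: the minimum `F₂`-rank of a matrix fitting the graph. -/
noncomputable def minrk {V : Type} [Fintype V] (E : V → V → Prop) : ℕ :=
  sInf {r | ∃ A : Matrix V V (ZMod 2), Fits E A ∧ A.rank = r}

/-- `rminrk₂`: the minimum `F₂`-rank of a matrix in `𝒜` fitting the graph. -/
noncomputable def rminrk {V : Type} [Fintype V] (E : V → V → Prop)
    (𝒜 : Set (Matrix V V (ZMod 2))) : ℕ :=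
  sInf {r | ∃ A ∈ 𝒜, Fits E A ∧ A.rank = r}

/-- The column repetition function `φ_{(R,B)}`: the column of `φ(A)` indexed by
`v_{(u,a)}` is the `a`-th column of `A`. -/
def phi (R : Matrix (Fin n) (Fin m) (ZMod 2))
    (A : Matrix (Vtx R) (Fin m) (ZMod 2)) : Matrix (Vtx R) (Vtx R) (ZMod 2) :=
  Matrix.of fun k v => A k v.1.2

/-- The sender neighborhood `N_u = {v_{(w,b)} ∈ V : B u b = 1}`. -/
def senderNbhd (R B : Matrix (Fin n) (Fin m) (ZMod 2)) (u : Fin n) : Set (Vtx R) :=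
  {v | B u v.1.2 = 1}

/-- A neighborhood partition `{Ñ_1, …, Ñ_n}`. -/
def IsNbhdPartition (R B : Matrix (Fin n) (Fin m) (ZMod 2))
    (N : Fin n → Set (Vtx R)) : Prop :=
  (∀ i, N i ⊆ senderNbhd R B i) ∧
  (∀ i j, i ≠ j → Disjoint (N i) (N j)) ∧
  (⋃ i, N i) = Set.univ

open Classical in
/-- `R^(i)`: the request matrix of the EIC subproblem induced by `Ñ_i`; it has ones
exactly at the requirement pairs whose vertex lies in `Ñ_i`. -/
noncomputable def Rsub (R : Matrix (Fin n) (Fin m) (ZMod 2))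
    (N : Fin n → Set (Vtx R)) (i : Fin n) : Matrix (Fin n) (Fin m) (ZMod 2) :=
  Matrix.of fun u a =>
    if hr : R u a = 1 then (if (⟨(u, a), hr⟩ : Vtx R) ∈ N i then 1 else 0) else 0

open Classical in
/-- `B^(i)`: the has-matrix of the EIC subproblem induced by `Ñ_i`; it agrees with `B`
on the columns of blocks requested in `Ñ_i` and is zero elsewhere. -/
noncomputable def Bsub (R B : Matrix (Fin n) (Fin m) (ZMod 2))
    (N : Fin n → Set (Vtx R)) (i : Fin n) : Matrix (Fin n) (Fin m) (ZMod 2) :=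
  Matrix.of fun u a => if ∃ v ∈ N i, v.1.2 = a then B u a else 0

/-- `Cl` is a clique for the edge relation `E`. -/
def IsClique {V : Type} (E : V → V → Prop) (Cl : Set V) : Prop :=
  ∀ k ∈ Cl, ∀ l ∈ Cl, k ≠ l → E k l

/-- `I` is an independent set for the edge relation `E` (no edge in either direction). -/
def IsIndep {V : Type} (E : V → V → Prop) (I : Set V) : Prop :=
  ∀ k ∈ I, ∀ l ∈ I, k ≠ l → ¬ E k l ∧ ¬ E l k

/-- `χ(Ḡ|_S)`: the minimum number of cliques of the induced subgraph `G|_S`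
needed to partition `S`. -/
noncomputable def cliqueCoverNum {V : Type} (E : V → V → Prop) (S : Set V) : ℕ :=
  sInf {t | ∃ Cl : Fin t → Set V, (∀ i, Cl i ⊆ S) ∧ (∀ i, IsClique E (Cl i)) ∧
    (∀ i j, i ≠ j → Disjoint (Cl i) (Cl j)) ∧ (⋃ i, Cl i) = S}

/-- `χ(G)`: the minimum number of independent sets of `G` needed to partition
its vertex set. -/
noncomputable def chromNum {V : Type} [Fintype V] (E : V → V → Prop) : ℕ :=
  sInf {t | ∃ I : Fin t → Set V, (∀ i, IsIndep E (I i)) ∧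
    (∀ i j, i ≠ j → Disjoint (I i) (I j)) ∧ (⋃ i, I i) = Set.univ}

/-- `ω(Ḡ|_S)`: the maximum size of an independent set of the induced subgraph `G|_S`. -/
noncomputable def indepNum {V : Type} (E : V → V → Prop) (S : Set V) : ℕ :=
  sSup {t | ∃ I ⊆ S, IsIndep E I ∧ I.ncard = t}

/-- The set of neighborhood-cliques: vertex sets of maximal cliques of the induced
subgraphs `G|_{N_i}`, over all senders `i`. -/
def nbhdCliques (R B : Matrix (Fin n) (Fin m) (ZMod 2)) : Set (Set (Vtx R)) :=
  {Cl | ∃ i : Fin n, Cl ⊆ senderNbhd R B i ∧ IsClique (probEdge R B) Cl ∧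
    ∀ Cl', Cl ⊆ Cl' → Cl' ⊆ senderNbhd R B i → IsClique (probEdge R B) Cl' → Cl' = Cl}

/-!
Node `u` can decode block `a` exactly when `e_a = y + z` with `y` in the span of the transmitted
rows and `z` supported on the blocks that `u` has. Only the decoding vectors `y` matter, so the
rows of a centralized solution may be replaced by a basis of their span that consists of decoding
vectors. Such a basis vector `y = e_a - z` need not be computable by any single node, but `z` is
computable by `u` and `e_a` by any node that has `a`; broadcasting both doubles the length.
-/

section LinearAlgebra

variable {ι κ μ K : Type*}

theorem exists_eq_vecMul_iff_mem_span [Fintype ι] [Semiring K] {A : Matrix ι κ K} {x : κ → K} :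
    (∃ c : ι → K, x = c ᵥ* A) ↔ x ∈ Submodule.span K (Set.range A.row) := by
  simp only [← range_vecMulLinear, LinearMap.mem_range, Matrix.vecMulLinear_apply, eq_comm]

theorem range_row_fromRows (A : Matrix ι κ K) (A' : Matrix μ κ K) :
    Set.range (fromRows A A').row = Set.range A.row ∪ Set.range A'.row :=
  Set.Sum.elim_range A.row A'.row

theorem span_range_row_diagonal [Finite ι] [DecidableEq ι] [DivisionSemiring K] (d : ι → K) :
    Submodule.span K (Set.range (diagonal d).row) =
      Submodule.pi {i | d i = 0} fun _ => (⊥ : Submodule K K) := by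
  cases nonempty_fintype ι
  ext x
  rw [← exists_eq_vecMul_iff_mem_span, Submodule.mem_pi]
  constructor
  · rintro ⟨c, rfl⟩ i (hi : d i = 0)
    simp [vecMul_diagonal, hi]
  · intro hx
    refine ⟨fun i => x i / d i, funext fun i => ?_⟩
    rw [vecMul_diagonal]
    exact (div_mul_cancel_of_imp fun hi => hx i hi).symm

end LinearAlgebra

variable {R B : Matrix (Fin n) (Fin m) (ZMod 2)} {ι κ : Type} [Fintype ι] [Fintype κ]

/-- The space of block combinations that node `u` can compute from the blocks it has, encoded as
the vectors vanishing at every block `u` does not have. -/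
def heldSpace (B : Matrix (Fin n) (Fin m) (ZMod 2)) (u : Fin n) :
    Submodule (ZMod 2) (Fin m → ZMod 2) :=
  Submodule.pi {a | B u a = 0} fun _ => ⊥

theorem mem_heldSpace {u : Fin n} {x : Fin m → ZMod 2} :
    x ∈ heldSpace B u ↔ ∀ a, B u a = 0 → x a = 0 :=
  Iff.rfl

theorem e_mem_heldSpace {w : Fin n} {a : Fin m} (h : B w a = 1) : e m a ∈ heldSpace B w := by
  refine mem_heldSpace.2 fun b hb => Pi.single_eq_of_ne ?_ 1
  rintro rfl
  exact one_ne_zero (h.symm.trans hb)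

theorem isCentralizedSolution_iff {β : Matrix ι (Fin m) (ZMod 2)} :
    IsCentralizedSolution R B β ↔
      ∀ u a, R u a = 1 → e m a ∈ Submodule.span (ZMod 2) (Set.range β.row) ⊔ heldSpace B u := by
  simp only [IsCentralizedSolution, exists_eq_vecMul_iff_mem_span, range_row_fromRows,
    Submodule.span_union, span_range_row_diagonal, heldSpace]

theorem IsCentralizedSolution.of_span_le {β : Matrix ι (Fin m) (ZMod 2)}
    {γ : Matrix κ (Fin m) (ZMod 2)} (hβ : IsCentralizedSolution R B β)
    (hle : Submodule.span (ZMod 2) (Set.range β.row) ≤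
      Submodule.span (ZMod 2) (Set.range γ.row)) :
    IsCentralizedSolution R B γ :=
  isCentralizedSolution_iff.2 fun u a hR =>
    sup_le_sup_right hle _ (isCentralizedSolution_iff.1 hβ u a hR)

theorem exists_isCentralizedSolution_Copt (R B : Matrix (Fin n) (Fin m) (ZMod 2)) :
    ∃ β : Matrix (Fin (Copt R B)) (Fin m) (ZMod 2), IsCentralizedSolution R B β := by
  refine Nat.sInf_mem (s := {h | ∃ β : Matrix (Fin h) (Fin m) (ZMod 2),
    IsCentralizedSolution R B β}) ⟨m, 1, fun u a _ => ⟨Sum.elim (e m a) 0, ?_⟩⟩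
  simp

theorem IsBroadcastSolution.Dopt_le {h : Fin n → ℕ}
    {β : ∀ u : Fin n, Matrix (Fin (h u)) (Fin m) (ZMod 2)} (hβ : IsBroadcastSolution R B β) :
    Dopt R B ≤ ∑ u, h u :=
  Nat.sInf_le ⟨h, β, hβ, rfl⟩

theorem IsCentralizedSolution.exists_isBroadcastSolution {β : Matrix ι (Fin m) (ZMod 2)}
    (hβ : IsCentralizedSolution R B β) {sender : ι → Fin n}
    (hsender : ∀ i, β i ∈ heldSpace B (sender i)) :
    ∃ (h : Fin n → ℕ) (γ : ∀ u : Fin n, Matrix (Fin (h u)) (Fin m) (ZMod 2)),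
      IsBroadcastSolution R B γ ∧ ∑ u, h u = Fintype.card ι := by
  classical
  let rowsOf (u : Fin n) : {i // sender i = u} ≃ Fin (Fintype.card {i // sender i = u}) :=
    Fintype.equivFin _
  refine ⟨fun u => Fintype.card {i // sender i = u},
    fun u => β.submatrix (fun j => ((rowsOf u).symm j : ι)) id, ⟨?_, ?_⟩, ?_⟩
  · intro u a hB j
    have hu : sender ((rowsOf u).symm j) = u := ((rowsOf u).symm j).2
    exact mem_heldSpace.1 (hsender _) a (by rwa [hu])
  · refine hβ.of_span_le (Submodule.span_mono ?_)
    rintro _ ⟨i, rfl⟩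
    have hi : ((rowsOf (sender i)).symm (rowsOf (sender i) ⟨i, rfl⟩) : ι) = i :=
      congrArg Subtype.val (Equiv.symm_apply_apply _ _)
    exact ⟨⟨sender i, rowsOf (sender i) ⟨i, rfl⟩⟩, congrArg β hi⟩
  · rw [← Fintype.card_sigma]
    exact Fintype.card_congr (Equiv.sigmaFiberEquiv sender)

/-- The vectors from which some node can decode a block that it requests, using only the blocks
it has. -/
def decodingVectors (R B : Matrix (Fin n) (Fin m) (ZMod 2)) : Set (Fin m → ZMod 2) :=
  {y | ∃ u a, R u a = 1 ∧ e m a - y ∈ heldSpace B u}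

theorem IsCentralizedSolution.exists_rows_mem_decodingVectors {β : Matrix ι (Fin m) (ZMod 2)}
    (hβ : IsCentralizedSolution R B β) :
    ∃ k ≤ β.rank, ∃ γ : Matrix (Fin k) (Fin m) (ZMod 2),
      IsCentralizedSolution R B γ ∧ ∀ i, γ i ∈ decodingVectors R B := by
  let rowSpan : Submodule (ZMod 2) (Fin m → ZMod 2) := Submodule.span (ZMod 2) (Set.range β.row)
  obtain ⟨γ, hγ_mem, hγ_span, -⟩ := Submodule.exists_fun_fin_finrank_span_eq (ZMod 2)
    ((rowSpan : Set (Fin m → ZMod 2)) ∩ decodingVectors R B)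
  refine ⟨_, ?_, γ, isCentralizedSolution_iff.2 fun u a hR => ?_, fun i => (hγ_mem i).2⟩
  · rw [β.rank_eq_finrank_span_row]
    exact Submodule.finrank_mono (Submodule.span_le.2 Set.inter_subset_left)
  · obtain ⟨y, hy, z, hz, hyz⟩ := Submodule.mem_sup.1 (isCentralizedSolution_iff.1 hβ u a hR)
    have hy_decodes : y ∈ decodingVectors R B :=
      ⟨u, a, hR, by rwa [← hyz, add_sub_cancel_left]⟩
    have hy_span : y ∈ Submodule.span (ZMod 2) (Set.range γ) := by
      rw [hγ_span]
      exact Submodule.subset_span ⟨hy, hy_decodes⟩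
    exact Submodule.mem_sup.2 ⟨y, hy_span, z, hz, hyz⟩

theorem IsCentralizedSolution.exists_isBroadcastSolution_of_rows_mem_decodingVectors
    {γ : Matrix ι (Fin m) (ZMod 2)} (hγ : IsCentralizedSolution R B γ)
    (hdec : ∀ i, γ i ∈ decodingVectors R B) (hheld : ∀ u a, R u a = 1 → ∃ w, B w a = 1) :
    ∃ (h : Fin n → ℕ) (β : ∀ u : Fin n, Matrix (Fin (h u)) (Fin m) (ZMod 2)),
      IsBroadcastSolution R B β ∧ ∑ u, h u = 2 * Fintype.card ι := by
  choose requester block hR hdiff using hdec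
  choose holder hholder using fun i => hheld (requester i) (block i) (hR i)
  let blocks : Matrix ι (Fin m) (ZMod 2) := of fun i => e m (block i)
  let differences : Matrix ι (Fin m) (ZMod 2) := blocks - γ
  have hsol : IsCentralizedSolution R B (fromRows blocks differences) := by
    refine hγ.of_span_le (Submodule.span_le.2 ?_)
    rintro _ ⟨i, rfl⟩
    have hγ_eq : γ.row i = blocks i - differences i := (sub_sub_cancel (blocks i) (γ i)).symm
    rw [hγ_eq]
    exact Submodule.sub_mem _ (Submodule.subset_span ⟨Sum.inl i, rfl⟩)
      (Submodule.subset_span ⟨Sum.inr i, rfl⟩)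
  have hsender : ∀ t, fromRows blocks differences t ∈
      heldSpace B (Sum.elim holder requester t) := by
    rintro (i | i)
    · exact e_mem_heldSpace (hholder i)
    · exact hdiff i
  obtain ⟨h, β, hβ, hlength⟩ := hsol.exists_isBroadcastSolution hsender
  exact ⟨h, β, hβ, by rw [hlength, Fintype.card_sum, two_mul]⟩

theorem decentralized_le_two_centralized_general {β : Matrix ι (Fin m) (ZMod 2)}
    (hβ : IsCentralizedSolution R B β) (hheld : ∀ u a, R u a = 1 → ∃ w, B w a = 1) :
    ∃ (h : Fin n → ℕ) (γ : ∀ u : Fin n, Matrix (Fin (h u)) (Fin m) (ZMod 2)),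
      IsBroadcastSolution R B γ ∧ ∑ u, h u ≤ 2 * β.rank := by
  obtain ⟨k, hk, δ, hδ, hδ_decodes⟩ := hβ.exists_rows_mem_decodingVectors
  obtain ⟨h, γ, hγ, hlength⟩ :=
    hδ.exists_isBroadcastSolution_of_rows_mem_decodingVectors hδ_decodes hheld
  refine ⟨h, γ, hγ, ?_⟩
  rw [hlength, Fintype.card_fin]
  exact Nat.mul_le_mul_left 2 hk

theorem decentralized_le_two_centralized {n m : ℕ}
    (R B : Matrix (Fin n) (Fin m) (ZMod 2)) (hdisj : DisjointSupports R B)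
    (hheld : ∀ u a, R u a = 1 → ∃ w, B w a = 1) :
    Dopt R B ≤ 2 * Copt R B := by
  obtain ⟨β, hβ⟩ := exists_isCentralizedSolution_Copt R B
  obtain ⟨h, γ, hγ, hlength⟩ := decentralized_le_two_centralized_general hβ hheld
  calc
    Dopt R B ≤ ∑ u, h u := hγ.Dopt_le
    _ ≤ 2 * β.rank := hlength
    _ ≤ 2 * Copt R B := Nat.mul_le_mul_left 2 β.rank_le_height

end EIC
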